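/- (Hedges are confined to the intervention slice in the static case.) Let D be a DCN with static hidden confounders, and let X ⊆ V_{t_x} and Y ⊆ V_{t_y} for two time slices t_x < t_y. If there is a hedge H for P(Y|do(X)) in D, then H ⊆ V_{t_x}, i.e., the hedge lies entirely within time slice t_x. -/

import Mathlib

/-- A causal graph over a set `V` of observed variables: directed edges between
observed variables, and bidirected edges (`conf`) representing hidden confounders. -/
structure CausalGraph (V : Type) where
  edge : V → V → Prop
  conf : V → V → Prop

namespace CausalGraph

variable {V : Type}

/-- `i` is a (strict) ancestor of `j` in `G`. -/
def Anc (G : CausalGraph V) (i j : V) : Prop :=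
  Relation.TransGen G.edge i j

/-- Symmetrized bidirected adjacency (presence of a hidden confounder). -/
def Bid (G : CausalGraph V) (i j : V) : Prop :=
  G.conf i j ∨ G.conf j i

/-- The mutilated graph `G_{X̄}`: all edges with an arrowhead into `X` removed. -/
def cutIn (G : CausalGraph V) (X : Set V) : CausalGraph V where
  edge := fun i j => G.edge i j ∧ j ∉ X
  conf := fun i j => G.conf i j ∧ i ∉ X ∧ j ∉ X

/-- The mutilated graph `G_{X̲}`: all directed edges leaving `X` removed. -/
def cutOut (G : CausalGraph V) (X : Set V) : CausalGraph V where
  edge := fun i j => G.edge i j ∧ i ∉ X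
  conf := G.conf

/-- Active walks used to define d-separation: `DConn G W x h y` holds iff there is a
walk from `x` to `y` which is active given the conditioning set `W` (every interior
collider belongs to `W` and every interior non-collider avoids `W`), and whose last
edge has an arrowhead at `y` iff `h = true`. -/
inductive DConn (G : CausalGraph V) (W : Set V) : V → Bool → V → Prop
  | dir {x y : V} : G.edge x y → DConn G W x true y
  | rev {x y : V} : G.edge y x → DConn G W x false y
  | bid {x y : V} : G.Bid x y → DConn G W x true y
  | step_out {x v y : V} {h : Bool} :
      DConn G W x h v → v ∉ W → G.edge v y → DConn G W x true y
  | step_in_col {x v y : V} :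
      DConn G W x true v → v ∈ W → G.edge y v → DConn G W x false y
  | step_in_non {x v y : V} :
      DConn G W x false v → v ∉ W → G.edge y v → DConn G W x false y
  | step_bid_col {x v y : V} :
      DConn G W x true v → v ∈ W → G.Bid v y → DConn G W x true y
  | step_bid_non {x v y : V} :
      DConn G W x false v → v ∉ W → G.Bid v y → DConn G W x true y

/-- `Y` and `Z` are d-separated by the conditioning set `W` in `G`. -/
def DSep (G : CausalGraph V) (W Y Z : Set V) : Prop :=
  ∀ y ∈ Y, ∀ z ∈ Z, ∀ h : Bool, ¬ DConn G W y h z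

/-- The set of (reflexive) ancestors of the set `Y` in `G`. -/
def AnSet (G : CausalGraph V) (Y : Set V) : Set V :=
  {v | ∃ y ∈ Y, Relation.ReflTransGen G.edge v y}

/-- `F` is an `R`-rooted C-forest in `G`: the nodes of `F` form a single
C-component (pairwise connected by paths consisting entirely of bidirected edges
within `F`), every node of `F` has at most one child in `F`, and `R` is the set of
childless nodes of `F`. -/
def IsCForest (G : CausalGraph V) (F R : Set V) : Prop :=
  (∀ a ∈ F, ∀ b ∈ F,
      Relation.ReflTransGen (fun u w => G.Bid u w ∧ u ∈ F ∧ w ∈ F) a b) ∧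
  (∀ a ∈ F, ∀ b ∈ F, ∀ c ∈ F, G.edge a b → G.edge a c → b = c) ∧
  R = {a | a ∈ F ∧ ∀ b ∈ F, ¬ G.edge a b}

/-- The `R`-rooted C-forests `F, F'` form a hedge for `P(Y | do(X))` in `G`:
`F'` is a subgraph of `F`, `X` occurs only in `F` (`X ∩ F ≠ ∅`, `X ∩ F' = ∅`), and
`R ⊆ An(Y)` in the graph with all edges into `X` removed. -/
def IsHedge (G : CausalGraph V) (X Y F F' R : Set V) : Prop :=
  G.IsCForest F R ∧ G.IsCForest F' R ∧ F' ⊆ F ∧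
  (X ∩ F).Nonempty ∧ X ∩ F' = ∅ ∧ R ⊆ (G.cutIn X).AnSet Y

/-- There is a hedge for `P(Y | do(X))` in `G`. -/
def Hedge (G : CausalGraph V) (X Y : Set V) : Prop :=
  ∃ F F' R, G.IsHedge X Y F F' R

/-- The subgraph of `G` induced on the vertex set `A`. -/
def restrict (G : CausalGraph V) (A : Set V) : CausalGraph V where
  edge := fun i j => G.edge i j ∧ i ∈ A ∧ j ∈ A
  conf := fun i j => G.conf i j ∧ i ∈ A ∧ j ∈ A

end CausalGraph

/-- A dynamic causal network: a causal graph whose variables are assigned to integer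
time slices; directed edges stay within a time slice or point into the next time
slice (causes precede effects). -/
structure DCN (V : Type) extends CausalGraph V where
  slice : V → ℤ
  edge_slice : ∀ i j, edge i j → slice j = slice i ∨ slice j = slice i + 1

/-- Hedges are confined to the intervention slice in the static
case.  Let `D` be a DCN with static hidden confounders, and let `X ⊆ V_{t_x}`
and `Y ⊆ V_{t_y}` for two time slices `t_x < t_y`.  If `F, F'` (with root set
`R`) form a hedge for `P(Y | do(X))` in `D`, then the hedge lies entirely within
the time slice `t_x`. -/
theorem dcn_static_hedge_within_slice
    {V : Type} (D : DCN V)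
    (hstatic : ∀ i j, D.conf i j → D.slice i = D.slice j)
    (tx ty : ℤ) (hlt : tx < ty)
    (X Y : Set V)
    (hX : X ⊆ {v | D.slice v = tx})
    (hY : Y ⊆ {v | D.slice v = ty})
    (F F' R : Set V)
    (hhedge : D.toCausalGraph.IsHedge X Y F F' R) :
    F ∪ F' ⊆ {v | D.slice v = tx} := by
  obtain ⟨⟨hconn, _, _⟩, _, hsub, ⟨x, hxX, hxF⟩, _, _⟩ := hhedge
  have key : ∀ v ∈ F, D.slice v = tx := by
    intro v hv
    have h := hconn x hxF v hv
    clear hv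
    induction h with
    | refl => exact hX hxX
    | tail _ hbc ih =>
      rcases hbc.1 with h | h
      · exact (hstatic _ _ h).symm.trans ih
      · exact (hstatic _ _ h).trans ih
  rintro v (hv | hv)
  · exact key v hv
  · exact key v (hsub hv)
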